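/- arXiv:2408.04642 — 2 statements merged into one kernel-verified Lean document; each statement's English description precedes it below -/
import Mathlib

section
/- For i = 1, 2, 3, let G_i be a 2-factor Hamiltonian cubic bipartite graph with k vertices and let e_i = u_iv_i ∈ E(G_i). Let G be the graph obtained from the disjoint union of the graphs G_i − e_i by adding two new vertices w and z and the six new edges wu_i and zv_i for i = 1, 2, 3. Then G is a connected cubic bipartite graph of edge-connectivity two that is 2-factor isomorphic but not Hamiltonian. -/
open SimpleGraph

/-- A 2-factor of `G`: a 2-regular spanning subgraph, given as a simple graph `F ≤ G`
in which every vertex has exactly two neighbours. -/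
def IsTwoFactor {V : Type*} (G F : SimpleGraph V) : Prop :=
  F ≤ G ∧ ∀ v : V, (F.neighborSet v).ncard = 2

/-- A graph admitting a 2-factor is 2-factor Hamiltonian if every 2-factor of it is a
Hamiltonian cycle, i.e. every 2-factor is connected. -/
def TwoFactorHamiltonian {V : Type*} (G : SimpleGraph V) : Prop :=
  (∃ F, IsTwoFactor G F) ∧ ∀ F, IsTwoFactor G F → F.Connected

/-- A graph admitting a 2-factor is 2-factor isomorphic if any two of its 2-factors are
isomorphic as graphs. -/
def TwoFactorIsomorphic {V : Type*} (G : SimpleGraph V) : Prop :=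
  (∃ F, IsTwoFactor G F) ∧
    ∀ F F', IsTwoFactor G F → IsTwoFactor G F' → Nonempty (F ≃g F')

/-- `G` has edge-connectivity two: it is connected, deleting any one edge leaves it
connected, and some set of two edges disconnects it. -/
def EdgeConnectivityTwo {V : Type*} (G : SimpleGraph V) : Prop :=
  G.Connected ∧ (∀ e ∈ G.edgeSet, (G.deleteEdges {e}).Connected) ∧
    ∃ E : Set (Sym2 V), E ⊆ G.edgeSet ∧ E.ncard = 2 ∧ ¬ (G.deleteEdges E).Connected


lemma aux_cubic_reach {V : Type*} [Finite V] (G : SimpleGraph V)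
    (hc : ∀ v, (G.neighborSet v).ncard = 3) (hb : G.Colorable 2) {a b : V} (hab : G.Adj a b) :
    (G.deleteEdges {s(a, b)}).Reachable a b := by
  classical
  have := Fintype.ofFinite V
  by_contra hnr
  obtain ⟨C⟩ := hb
  let s : V → ℤ := fun x => if C x = 0 then 1 else -1
  have hs : ∀ x y, G.Adj x y → s x = - s y := by
    intro x y h
    have := C.valid h
    simp only [s]
    have h2 : ∀ i j : Fin 2, i ≠ j → (if i = 0 then (1:ℤ) else -1) = - (if j = 0 then 1 else -1) := by
      decide
    exact h2 _ _ this
  let A : V → V → ℤ := fun x y => if G.Adj x y then s x else 0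
  have hA : ∀ x y, A x y = - A y x := by
    intro x y
    by_cases h : G.Adj x y
    · simp [A, h, h.symm, hs x y h]
    · have h' : ¬ G.Adj y x := fun h' => h h'.symm
      simp [A, h, h']
  let S : Finset V := Finset.univ.filter fun x => (G.deleteEdges {s(a, b)}).Reachable a x
  have haS : a ∈ S := by simp [S]
  have hbS : b ∉ S := by simpa [S] using hnr
  have hcut : ∀ x ∈ S, ∀ y ∉ S, G.Adj x y → x = a ∧ y = b := by
    intro x hx y hy h
    simp only [S, Finset.mem_filter, Finset.mem_univ, true_and] at hx hy
    by_contra hne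
    have hxy : s(x, y) ≠ s(a, b) := by
      intro h'
      rcases Sym2.eq_iff.1 h' with h1 | h1
      · exact hne h1
      · obtain ⟨rfl, rfl⟩ := h1
        exact hnr hx
    apply hy
    refine hx.trans (Adj.reachable ?_)
    simp [deleteEdges_adj, h, hxy]
  have e1 : ∀ x, ∑ y, A x y = 3 * s x := by
    intro x
    have := hc x
    rw [Set.ncard_eq_toFinset_card'] at this
    simp only [A]
    rw [← Finset.sum_filter, Finset.sum_const]
    have h2 : (Finset.univ.filter fun y => G.Adj x y) = (G.neighborSet x).toFinset := by
      ext y; simp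
    rw [h2, this]; simp
  have e2 : ∑ x ∈ S, ∑ y ∈ S, A x y = 0 := by
    have h1 : ∑ x ∈ S, ∑ y ∈ S, A x y = - ∑ x ∈ S, ∑ y ∈ S, A x y := by
      conv_lhs => rw [Finset.sum_comm]
      rw [← Finset.sum_neg_distrib]
      refine Finset.sum_congr rfl fun x _ => ?_
      rw [← Finset.sum_neg_distrib]
      exact Finset.sum_congr rfl fun y _ => hA y x
    omega
  have e3 : ∑ x ∈ S, ∑ y ∈ Sᶜ, A x y = s a := by
    rw [Finset.sum_eq_single_of_mem a haS, Finset.sum_eq_single_of_mem b (by simpa using hbS)]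
    · simp [A, hab]
    · intro y hy hyb
      simp only [A]
      rw [if_neg]
      intro h
      exact hyb (hcut a haS y (by simpa using hy) h).2
    · intro x hx hxa
      refine Finset.sum_eq_zero fun y hy => ?_
      simp only [A]
      rw [if_neg]
      intro h
      exact hxa (hcut x hx y (by simpa using hy) h).1
  have e4 : ∑ x ∈ S, ∑ y, A x y = s a := by
    rw [← e3, ← zero_add (∑ x ∈ S, ∑ y ∈ Sᶜ, A x y), ← e2, ← Finset.sum_add_distrib]
    exact Finset.sum_congr rfl fun x _ => (Finset.sum_add_sum_compl S _).symm
  simp_rw [e1] at e4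
  rw [← Finset.mul_sum] at e4
  have : s a = 1 ∨ s a = -1 := by
    simp only [s]; split_ifs <;> simp
  omega

lemma aux_cubic_delete {V : Type*} [Finite V] (G : SimpleGraph V)
    (hc : ∀ v, (G.neighborSet v).ncard = 3) (hb : G.Colorable 2) (hconn : G.Connected)
    {a b : V} (hab : G.Adj a b) : (G.deleteEdges {s(a, b)}).Connected :=
  hconn.connected_delete_edge_of_not_isBridge
    (by rw [isBridge_iff, not_not]; exact aux_cubic_reach G hc hb hab)

/-- Hall: a cubic bipartite graph has a 2-factor. -/
lemma aux_cubic_factor {V : Type*} [Finite V] (G : SimpleGraph V)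
    (hc : ∀ v, (G.neighborSet v).ncard = 3) (hb : G.Colorable 2) : ∃ F, IsTwoFactor G F := by
  classical
  have := Fintype.ofFinite V
  obtain ⟨C⟩ := hb
  have hdeg : ∀ x, (Finset.univ.filter fun y => G.Adj x y).card = 3 := by
    intro x
    have := hc x
    rw [Set.ncard_eq_toFinset_card'] at this
    rw [← this]; congr 1; ext y; simp
  have hall : ∀ A : Finset V, A.card ≤ (Finset.univ.filter fun b => ∃ a ∈ A, G.Adj a b).card := by
    intro A
    have := Finset.card_nsmul_le_card_nsmul (R := ℕ) (s := A)
      (t := Finset.univ.filter fun b => ∃ a ∈ A, G.Adj a b) (r := G.Adj) (m := 3) (n := 3) ?_ ?_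
    · simp only [smul_eq_mul] at this
      omega
    · intro a ha
      rw [← hdeg a]
      simp only [Nat.cast_id]
      apply Finset.card_le_card
      intro y hy
      simp only [Finset.mem_filter, Finset.mem_univ, true_and] at hy
      simp only [Finset.bipartiteAbove, Finset.mem_filter, Finset.mem_univ, true_and]
      exact ⟨⟨a, ha, hy⟩, hy⟩
    · intro b _
      rw [← hdeg b]
      simp only [Nat.cast_id]
      apply Finset.card_le_card
      intro y hy
      simp only [Finset.bipartiteBelow, Finset.mem_filter] at hy
      simpa using hy.2.symm
  obtain ⟨f, hf, hfa⟩ := (Fintype.all_card_le_filter_rel_iff_exists_injective G.Adj).1 hall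
  let σ : Equiv.Perm V := Equiv.ofBijective f (Finite.injective_iff_bijective.1 hf)
  have hσ : ∀ x, G.Adj x (σ x) := hfa
  have hσ' : ∀ x, G.Adj x (σ.symm x) := fun x => by
    have := hσ (σ.symm x); simpa using this.symm
  let m : V → V := fun x => if C x = 0 then σ x else σ.symm x
  have hm : ∀ x, G.Adj x (m x) := by
    intro x; simp only [m]; split_ifs
    · exact hσ x
    · exact hσ' x
  have h2 : ∀ i j : Fin 2, i ≠ j → (i = 0 ↔ ¬ j = 0) := by decide
  have hmm : ∀ x, m (m x) = x := by
    intro x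
    have := h2 _ _ (C.valid (hm x))
    by_cases h : C x = 0
    · have h' := this.1 h
      simp only [m, h, if_true] at h' ⊢
      simp [h']
    · have h' : C (m x) = 0 := by tauto
      simp only [m, h, if_false] at h' ⊢
      simp [h']
  refine ⟨{ Adj := fun x y => G.Adj x y ∧ y ≠ m x, symm := ?_, loopless := ?_ }, ?_, ?_⟩
  · constructor
    rintro x y ⟨h, hne⟩
    refine ⟨h.symm, ?_⟩
    rintro rfl
    exact hne (hmm y).symm
  · constructor
    rintro x ⟨h, -⟩
    exact G.loopless.irrefl x h
  · intro x y h; exact h.1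
  · intro x
    have : ({y | G.Adj x y ∧ y ≠ m x} : Set V) = G.neighborSet x \ {m x} := by
      ext y; simp
    change ({y | G.Adj x y ∧ y ≠ m x} : Set V).ncard = 2
    have hmem : m x ∈ G.neighborSet x := hm x
    rw [this, Set.ncard_sdiff_singleton_of_mem hmem, hc]

lemma aux_cycle {V : Type*} [Fintype V] (F : SimpleGraph V)
    (h2 : ∀ v, (F.neighborSet v).ncard = 2) (hconn : F.Connected) :
    Nonempty (cycleGraph (Fintype.card V) ≃g F) := by
  classical
  have hcyc : F.IsCycles := fun v _ => h2 v
  obtain ⟨v⟩ := hconn.nonempty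
  have hn : (F.neighborSet v).Nonempty := by
    apply Set.nonempty_of_ncard_ne_zero; rw [h2]; omega
  obtain ⟨p, hp, hpv⟩ := hcyc.exists_cycle_toSubgraph_verts_eq_connectedComponentSupp
    (c := F.connectedComponentMk v) (v := v) rfl hn
  have hmem : ∀ x, x ∈ p.support := by
    intro x
    rw [← Walk.mem_verts_toSubgraph, hpv, ConnectedComponent.mem_supp_iff, ConnectedComponent.eq]
    exact hconn.preconnected x v
  have hham : p.IsHamiltonianCycle := by
    refine ⟨hp, ?_⟩
    apply hp.isPath_tail.isHamiltonian_of_mem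
    intro x
    rw [Walk.support_tail_of_not_nil _ hp.not_nil]
    have := hmem x
    rw [← Walk.cons_tail_support, List.mem_cons] at this
    rcases this with rfl | h
    · exact Walk.end_mem_tail_support hp.not_nil
    · exact h
  have hlen := hham.length_eq
  have h3 := hp.three_le_length
  rw [hlen] at h3
  obtain ⟨f⟩ := (cycleGraph_isContained_iff (G := F) (n := Fintype.card V) (by omega)).2
    ⟨v, p, hp, hlen⟩
  have hinj : Function.Injective f := f.injective
  have hbij : Function.Bijective f := by
    rw [Fintype.bijective_iff_injective_and_card]; exact ⟨hinj, by simp⟩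
  refine ⟨⟨Equiv.ofBijective f hbij, ?_⟩⟩
  intro a b
  simp only [Equiv.ofBijective_apply]
  refine ⟨fun h => ?_, fun h => f.toHom.map_adj h⟩
  have hsub : f '' ((cycleGraph (Fintype.card V)).neighborSet a) ⊆ F.neighborSet (f a) := by
    rintro _ ⟨c, hc, rfl⟩
    exact f.toHom.map_adj hc
  have hcard : ((cycleGraph (Fintype.card V)).neighborSet a).ncard = 2 := by
    obtain ⟨n, hn⟩ : ∃ n, Fintype.card V = n + 3 := ⟨Fintype.card V - 3, by omega⟩
    have key : ∀ (N : ℕ), N = n + 3 → ∀ a : Fin N, ((cycleGraph N).neighborSet a).ncard = 2 := by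
      rintro N rfl a
      rw [Set.ncard_eq_toFinset_card']
      exact cycleGraph_degree_three_le
    exact key _ hn a
  have heq := Set.eq_of_subset_of_ncard_le hsub
    (by rw [h2, Set.ncard_image_of_injective _ hinj, hcard]) (Set.toFinite _)
  have : f b ∈ F.neighborSet (f a) := h
  rw [← heq] at this
  obtain ⟨c, hc, hcb⟩ := this
  rw [← hinj hcb]; exact hc

lemma aux_walk {V : Type*} (F : SimpleGraph V) (T : Set V)
    (hT : ∀ x ∈ T, ∀ y, F.Adj x y → y ∈ T) {x y : V} (p : F.Walk x y) :
    ∀ hx : x ∈ T, ∃ hy : y ∈ T, (F.induce T).Reachable ⟨x, hx⟩ ⟨y, hy⟩ := by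
  induction p with
  | nil => exact fun hx => ⟨hx, Reachable.refl _⟩
  | cons h p ih =>
    intro hx
    obtain ⟨hy, hr⟩ := ih (hT _ hx _ h)
    refine ⟨hy, Reachable.trans (Adj.reachable ?_) hr⟩
    simpa using h

lemma aux_not_conn {V : Type*} (F : SimpleGraph V) (T : Set V)
    (hT : ∀ x ∈ T, ∀ y, F.Adj x y → y ∈ T) {a b : V} (ha : a ∈ T) (hb : b ∉ T) :
    ¬ F.Connected := by
  intro h
  obtain ⟨p⟩ := h.preconnected a b
  exact hb (aux_walk F T hT p ha).1

lemma aux_induce_conn {V : Type*} (F : SimpleGraph V) (T : Set V)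
    (hT : ∀ x ∈ T, ∀ y, F.Adj x y → y ∈ T) (a : V) (ha : a ∈ T)
    (hr : ∀ x ∈ T, F.Reachable a x) : (F.induce T).Connected := by
  rw [connected_iff_exists_forall_reachable]
  refine ⟨⟨a, ha⟩, ?_⟩
  rintro ⟨x, hx⟩
  obtain ⟨p⟩ := hr x hx
  exact (aux_walk F T hT p ha).2

lemma aux_induce_deg {V : Type*} (F : SimpleGraph V) (T : Set V)
    (hT : ∀ x ∈ T, ∀ y, F.Adj x y → y ∈ T) (x : T) :
    ((F.induce T).neighborSet x).ncard = (F.neighborSet (x : V)).ncard := by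
  rw [← Set.ncard_image_of_injective _ Subtype.val_injective]
  congr 1
  ext y
  constructor
  · rintro ⟨z, hz, rfl⟩
    exact hz
  · intro hy
    exact ⟨⟨y, hT _ x.2 y hy⟩, hy, rfl⟩

lemma aux_iso {V V' : Type*} [Finite V] [Finite V'] (F : SimpleGraph V) (F' : SimpleGraph V')
    (h2 : ∀ v, (F.neighborSet v).ncard = 2) (hconn : F.Connected)
    (h2' : ∀ v, (F'.neighborSet v).ncard = 2) (hconn' : F'.Connected)
    (hcard : Nat.card V = Nat.card V') : Nonempty (F ≃g F') := by
  have := Fintype.ofFinite V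
  have := Fintype.ofFinite V'
  obtain ⟨e⟩ := aux_cycle F h2 hconn
  obtain ⟨e'⟩ := aux_cycle F' h2' hconn'
  rw [Nat.card_eq_fintype_card, Nat.card_eq_fintype_card] at hcard
  rw [hcard] at e
  exact ⟨e.symm.trans e'⟩

/-- `F` splits along `S` into two connected parts. -/
def AuxSplit {W : Type*} (F : SimpleGraph W) (S : Set W) : Prop :=
  (∀ x ∈ S, ∀ y, F.Adj x y → y ∈ S) ∧ (F.induce S).Connected ∧ (F.induce Sᶜ).Connected

lemma aux_glue {W : Type*} [Finite W] (F F' : SimpleGraph W)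
    (h2 : ∀ v, (F.neighborSet v).ncard = 2) (h2' : ∀ v, (F'.neighborSet v).ncard = 2)
    (S S' : Set W) (hcard : S.ncard = S'.ncard) (hS : AuxSplit F S) (hS' : AuxSplit F' S') :
    Nonempty (F ≃g F') := by
  classical
  obtain ⟨c1, d1, d2⟩ := hS
  obtain ⟨c1', d1', d2'⟩ := hS'
  have c2 : ∀ x ∈ Sᶜ, ∀ y, F.Adj x y → y ∈ Sᶜ := fun x hx y h hy => hx (c1 y hy x h.symm)
  have c2' : ∀ x ∈ S'ᶜ, ∀ y, F'.Adj x y → y ∈ S'ᶜ := fun x hx y h hy => hx (c1' y hy x h.symm)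
  obtain ⟨e⟩ := aux_iso (F.induce S) (F'.induce S')
    (fun x => by rw [aux_induce_deg F S c1]; exact h2 _) d1
    (fun x => by rw [aux_induce_deg F' S' c1']; exact h2' _) d1'
    (by rw [Nat.card_coe_set_eq, Nat.card_coe_set_eq, hcard])
  obtain ⟨e'⟩ := aux_iso (F.induce Sᶜ) (F'.induce S'ᶜ)
    (fun x => by rw [aux_induce_deg F _ c2]; exact h2 _) d2
    (fun x => by rw [aux_induce_deg F' _ c2']; exact h2' _) d2'
    (by rw [Nat.card_coe_set_eq, Nat.card_coe_set_eq, Set.ncard_compl, Set.ncard_compl, hcard])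
  let φ : W ≃ W := (Equiv.Set.sumCompl S).symm.trans
    ((Equiv.sumCongr e.toEquiv e'.toEquiv).trans (Equiv.Set.sumCompl S'))
  refine ⟨⟨φ, ?_⟩⟩
  have k1 : ∀ x (hx : x ∈ S), φ x = (e ⟨x, hx⟩ : W) := by
    intro x hx
    simp [φ, Equiv.Set.sumCompl_symm_apply_of_mem hx]
  have k2 : ∀ x (hx : x ∉ S), φ x = (e' ⟨x, hx⟩ : W) := by
    intro x hx
    simp [φ, Equiv.Set.sumCompl_symm_apply_of_notMem hx]
  intro a b
  by_cases ha : a ∈ S <;> by_cases hb : b ∈ S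
  · rw [k1 a ha, k1 b hb]
    exact e.map_adj_iff (v := ⟨a, ha⟩) (w := ⟨b, hb⟩)
  · rw [k1 a ha, k2 b hb]
    exact iff_of_false (fun h => (e' ⟨b, hb⟩).2 (c1' _ (e ⟨a, ha⟩).2 _ h))
      (fun h => hb (c1 _ ha _ h))
  · rw [k2 a ha, k1 b hb]
    exact iff_of_false (fun h => (e' ⟨a, ha⟩).2 (c1' _ (e ⟨b, hb⟩).2 _ h.symm))
      (fun h => ha (c1 _ hb _ h.symm))
  · rw [k2 a ha, k2 b hb]
    exact e'.map_adj_iff (v := ⟨a, ha⟩) (w := ⟨b, hb⟩)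

/-- `H - uv` sits inside `G` via `ι`, attached by the edges `uw` and `vz`. -/
structure AuxPiece {V W : Type*} (G : SimpleGraph W) (H : SimpleGraph V) (ι : V → W)
    (u v : V) (w z : W) : Prop where
  inj : Function.Injective ι
  adj : ∀ x y, G.Adj (ι x) (ι y) ↔ H.Adj x y ∧ s(x, y) ≠ s(u, v)
  out : ∀ x b, G.Adj (ι x) b → (∃ y, b = ι y) ∨ (b = w ∧ x = u) ∨ (b = z ∧ x = v)
  aw : G.Adj (ι u) w
  az : G.Adj (ι v) z
  nw : ∀ x, ι x ≠ w
  nz : ∀ x, ι x ≠ z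
  wz : w ≠ z
  uv : H.Adj u v

section
variable {V W : Type*} {G : SimpleGraph W} {H : SimpleGraph V} {ι : V → W}
    {u v : V} {w z : W}

lemma AuxPiece.swap (P : AuxPiece G H ι u v w z) : AuxPiece G H ι v u z w where
  inj := P.inj
  adj := fun x y => by rw [P.adj, Sym2.eq_swap (a := v)]
  out := fun x b h => by have := P.out x b h; tauto
  aw := P.az
  az := P.aw
  nw := P.nz
  nz := P.nw
  wz := P.wz.symm
  uv := P.uv.symm

lemma AuxPiece.deg_other (P : AuxPiece G H ι u v w z) (F : SimpleGraph W) (hF : F ≤ G) (x : V)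
    (hw : x = u → ¬ F.Adj (ι u) w) (hz : x = v → ¬ F.Adj (ι v) z) :
    ((F.comap ι).neighborSet x).ncard = (F.neighborSet (ι x)).ncard := by
  rw [← Set.ncard_image_of_injective _ P.inj]
  congr 1
  ext y
  constructor
  · rintro ⟨y, hy, rfl⟩
    exact hy
  · intro hy
    have hy : F.Adj (ι x) y := hy
    rcases P.out x y (hF hy) with ⟨y, rfl⟩ | ⟨rfl, rfl⟩ | ⟨rfl, rfl⟩
    · exact ⟨y, hy, rfl⟩
    · exact absurd hy (hw rfl)
    · exact absurd hy (hz rfl)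

lemma AuxPiece.deg_u [Finite V] (P : AuxPiece G H ι u v w z) (F : SimpleGraph W) (hF : F ≤ G)
    (h : F.Adj (ι u) w) :
    ((F.comap ι).neighborSet u).ncard + 1 = (F.neighborSet (ι u)).ncard := by
  rw [← Set.ncard_image_of_injective _ P.inj, ← Set.ncard_insert_of_notMem (a := w)]
  · congr 1
    ext y
    constructor
    · rintro (rfl | ⟨y, hy, rfl⟩)
      · exact h
      · exact hy
    · intro hy
      have hy : F.Adj (ι u) y := hy
      rcases P.out u y (hF hy) with ⟨y, rfl⟩ | ⟨rfl, -⟩ | ⟨rfl, h⟩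
      · exact Or.inr ⟨y, hy, rfl⟩
      · exact Or.inl rfl
      · exact absurd h P.uv.ne
  · rintro ⟨y, -, hy⟩
    exact P.nw y hy

lemma AuxPiece.comap_eq (P : AuxPiece G H ι u v w z) :
    G.comap ι = H.deleteEdges {s(u, v)} := by
  ext x y
  simp [P.adj, deleteEdges_adj]

lemma AuxPiece.cubic_u [Finite V] (P : AuxPiece G H ι u v w z)
    (hc : ∀ v, (H.neighborSet v).ncard = 3) : (G.neighborSet (ι u)).ncard = 3 := by
  rw [← P.deg_u G le_rfl P.aw, P.comap_eq]
  have : (H.deleteEdges {s(u, v)}).neighborSet u = H.neighborSet u \ {v} := by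
    ext y
    have := P.uv.ne
    simp only [mem_neighborSet, deleteEdges_adj, Set.mem_singleton_iff, Set.mem_sdiff, Sym2.eq_iff]
    tauto
  have hmem : v ∈ H.neighborSet u := P.uv
  rw [this, Set.ncard_sdiff_singleton_of_mem hmem, hc]

lemma AuxPiece.cubic [Finite V] (P : AuxPiece G H ι u v w z)
    (hc : ∀ v, (H.neighborSet v).ncard = 3) (x : V) : (G.neighborSet (ι x)).ncard = 3 := by
  by_cases hu : x = u
  · subst hu; exact P.cubic_u hc
  by_cases hv : x = v
  · subst hv; exact P.swap.cubic_u hc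
  rw [← P.deg_other G le_rfl x (fun h => absurd h hu) (fun h => absurd h hv), P.comap_eq, ← hc x]
  congr 1
  ext y
  simp only [mem_neighborSet, deleteEdges_adj, Set.mem_singleton_iff, Sym2.eq_iff]
  tauto

lemma AuxPiece.parity1 [Finite V] (P : AuxPiece G H ι u v w z) (F : SimpleGraph W)
    (hF : IsTwoFactor G F) (h : F.Adj (ι u) w) : F.Adj (ι v) z := by
  classical
  have := Fintype.ofFinite V
  by_contra hz
  have hev := (F.comap ι).even_card_odd_degree_vertices
  have hdeg : ∀ x, (F.comap ι).degree x = ((F.comap ι).neighborSet x).ncard := by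
    intro x
    rw [Set.ncard_eq_toFinset_card', ← card_neighborFinset_eq_degree]
    rfl
  have : (Finset.univ.filter fun x => Odd ((F.comap ι).degree x)) = {u} := by
    ext x
    simp only [Finset.mem_filter, Finset.mem_univ, true_and, Finset.mem_singleton, hdeg]
    constructor
    · intro ho
      by_contra hu
      rw [P.deg_other F hF.1 x (fun h => absurd h hu) (fun _ => hz), hF.2] at ho
      exact absurd ho (by decide)
    · rintro rfl
      have := P.deg_u F hF.1 h
      rw [hF.2] at this
      rw [show ((F.comap ι).neighborSet x).ncard = 1 by omega]
      decide
  rw [this] at hev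
  simp at hev

lemma AuxPiece.parity [Finite V] (P : AuxPiece G H ι u v w z) (F : SimpleGraph W)
    (hF : IsTwoFactor G F) : F.Adj (ι u) w ↔ F.Adj (ι v) z :=
  ⟨P.parity1 F hF, P.swap.parity1 F hF⟩

lemma AuxPiece.conn [Finite V] (P : AuxPiece G H ι u v w z) (hH : TwoFactorHamiltonian H)
    (F : SimpleGraph W) (hF : IsTwoFactor G F) : (F.comap ι).Connected := by
  have hle : F.comap ι ≤ H := by
    intro x y h
    exact ((P.adj x y).1 (hF.1 h)).1
  have hnuv : ¬ (F.comap ι).Adj u v := fun h => ((P.adj u v).1 (hF.1 h)).2 rfl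
  by_cases hw : F.Adj (ι u) w
  · have hz := (P.parity F hF).1 hw
    set K := F.comap ι ⊔ edge u v with hK
    have hKadj : ∀ x y, K.Adj x y ↔ (F.comap ι).Adj x y ∨ (x = u ∧ y = v) ∨ (x = v ∧ y = u) := by
      intro x y
      have := P.uv.ne
      rw [hK, sup_adj, edge_adj]
      constructor
      · tauto
      · rintro (h | ⟨rfl, rfl⟩ | ⟨rfl, rfl⟩)
        · exact Or.inl h
        · exact Or.inr ⟨by tauto, this⟩
        · exact Or.inr ⟨by tauto, this.symm⟩
    have h2 : IsTwoFactor H K := by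
      refine ⟨?_, ?_⟩
      · intro x y h
        rcases (hKadj x y).1 h with h | ⟨rfl, rfl⟩ | ⟨rfl, rfl⟩
        · exact hle h
        · exact P.uv
        · exact P.uv.symm
      · intro x
        by_cases hu : x = u
        · subst hu
          have : K.neighborSet x = insert v ((F.comap ι).neighborSet x) := by
            ext y
            have := P.uv.ne
            simp only [mem_neighborSet, hKadj, Set.mem_insert_iff]
            tauto
          have hn : v ∉ (F.comap ι).neighborSet x := hnuv
          rw [this, Set.ncard_insert_of_notMem hn (Set.toFinite _), P.deg_u F hF.1 hw, hF.2]
        by_cases hv : x = v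
        · subst hv
          have : K.neighborSet x = insert u ((F.comap ι).neighborSet x) := by
            ext y
            have := P.uv.ne
            simp only [mem_neighborSet, hKadj, Set.mem_insert_iff]
            tauto
          have hn : u ∉ (F.comap ι).neighborSet x := fun h => hnuv (Adj.symm h)
          rw [this, Set.ncard_insert_of_notMem hn (Set.toFinite _),
            P.swap.deg_u F hF.1 hz, hF.2]
        · rw [← hF.2 (ι x), ← P.deg_other F hF.1 x (fun h => absurd h hu) (fun h => absurd h hv)]
          congr 1
          ext y
          simp only [mem_neighborSet, hKadj]
          tauto
    have hKc := hH.2 K h2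
    have hcyc : K.IsCycles := fun x _ => h2.2 x
    have hKuv : K.Adj u v := (hKadj u v).2 (by tauto)
    have := hKc.connected_delete_edge_of_not_isBridge (x := u) (y := v)
      (by rw [isBridge_iff, not_not]; exact hcyc.reachable_deleteEdges hKuv)
    have he : K.deleteEdges {s(u, v)} = F.comap ι := by
      ext x y
      rw [deleteEdges_adj, hKadj, Set.mem_singleton_iff, Sym2.eq_iff]
      constructor
      · tauto
      · intro h
        refine ⟨Or.inl h, ?_⟩
        rintro (⟨rfl, rfl⟩ | ⟨rfl, rfl⟩)
        · exact hnuv h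
        · exact hnuv h.symm
    rwa [he] at this
  · have hz := fun h => hw ((P.parity F hF).2 h)
    exact hH.2 _ ⟨hle, fun x => by rw [P.deg_other F hF.1 x (fun _ => hw) (fun _ => hz), hF.2]⟩

lemma AuxPiece.reach (F : SimpleGraph W) (hc : (F.comap ι).Connected)
    (h : F.Adj (ι u) w) (x : V) : F.Reachable w (ι x) := by
  have := (hc.preconnected u x).map (⟨ι, fun h => h⟩ : F.comap ι →g F)
  exact (Adj.reachable h.symm).trans this

end

section
variable {V₁ V₂ V₃ W : Type*} [Finite V₁] [Finite V₂] [Finite V₃]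
  {G : SimpleGraph W} {G₁ : SimpleGraph V₁} {G₂ : SimpleGraph V₂} {G₃ : SimpleGraph V₃}
  {ι₁ : V₁ → W} {ι₂ : V₂ → W} {ι₃ : V₃ → W} {u₁ v₁ : V₁} {u₂ v₂ : V₂} {u₃ v₃ : V₃} {w z : W}

lemma aux_split (P₁ : AuxPiece G G₁ ι₁ u₁ v₁ w z) (P₂ : AuxPiece G G₂ ι₂ u₂ v₂ w z)
    (P₃ : AuxPiece G G₃ ι₃ u₃ v₃ w z) (h₁ : TwoFactorHamiltonian G₁)
    (h₂ : TwoFactorHamiltonian G₂) (h₃ : TwoFactorHamiltonian G₃)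
    (hcov : ∀ b : W, (∃ x, b = ι₁ x) ∨ (∃ x, b = ι₂ x) ∨ (∃ x, b = ι₃ x) ∨ b = w ∨ b = z)
    (F : SimpleGraph W) (hF : IsTwoFactor G F) (f₁ : ¬ F.Adj (ι₁ u₁) w)
    (f₂ : F.Adj (ι₂ u₂) w) (f₃ : F.Adj (ι₃ u₃) w) : AuxSplit F (Set.range ι₁) := by
  have g₁ := fun h => f₁ ((P₁.parity F hF).2 h)
  have g₂ := (P₂.parity F hF).1 f₂
  have c₁ := P₁.conn h₁ F hF
  have c₂ := P₂.conn h₂ F hF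
  have c₃ := P₃.conn h₃ F hF
  have hcl : ∀ x ∈ Set.range ι₁, ∀ y, F.Adj x y → y ∈ Set.range ι₁ := by
    rintro _ ⟨x, rfl⟩ y h
    rcases P₁.out x y (hF.1 h) with ⟨y, rfl⟩ | ⟨rfl, rfl⟩ | ⟨rfl, rfl⟩
    · exact ⟨y, rfl⟩
    · exact absurd h f₁
    · exact absurd h g₁
  refine ⟨hcl, ?_, ?_⟩
  · refine aux_induce_conn F _ hcl (ι₁ u₁) ⟨u₁, rfl⟩ ?_
    rintro _ ⟨x, rfl⟩
    exact (c₁.preconnected u₁ x).map (⟨ι₁, fun h => h⟩ : F.comap ι₁ →g F)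
  · refine aux_induce_conn F _ (fun x hx y h hy => hx (hcl y hy x h.symm)) w ?_ ?_
    · rintro ⟨x, hx⟩
      exact P₁.nw x hx
    · intro b hb
      rcases hcov b with ⟨x, rfl⟩ | ⟨x, rfl⟩ | ⟨x, rfl⟩ | rfl | rfl
      · exact absurd ⟨x, rfl⟩ hb
      · exact AuxPiece.reach F c₂ f₂ x
      · exact AuxPiece.reach F c₃ f₃ x
      · exact Reachable.refl _
      · exact (AuxPiece.reach F c₂ f₂ v₂).trans (Adj.reachable g₂)

lemma aux_split_any (P₁ : AuxPiece G G₁ ι₁ u₁ v₁ w z) (P₂ : AuxPiece G G₂ ι₂ u₂ v₂ w z)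
    (P₃ : AuxPiece G G₃ ι₃ u₃ v₃ w z) (h₁ : TwoFactorHamiltonian G₁)
    (h₂ : TwoFactorHamiltonian G₂) (h₃ : TwoFactorHamiltonian G₃)
    (hcov : ∀ b : W, (∃ x, b = ι₁ x) ∨ (∃ x, b = ι₂ x) ∨ (∃ x, b = ι₃ x) ∨ b = w ∨ b = z)
    (d₁₂ : ι₁ u₁ ≠ ι₂ u₂) (d₁₃ : ι₁ u₁ ≠ ι₃ u₃) (d₂₃ : ι₂ u₂ ≠ ι₃ u₃)
    (hw : ∀ b, G.Adj b w → b = ι₁ u₁ ∨ b = ι₂ u₂ ∨ b = ι₃ u₃)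
    (F : SimpleGraph W) (hF : IsTwoFactor G F) :
    AuxSplit F (Set.range ι₁) ∨ AuxSplit F (Set.range ι₂) ∨ AuxSplit F (Set.range ι₃) := by
  have h2 := hF.2 w
  have hsub : F.neighborSet w ⊆ {ι₁ u₁, ι₂ u₂, ι₃ u₃} := by
    intro b hb
    exact hw b (hF.1 (F.symm.symm _ _ hb))
  obtain ⟨a, b, hab, hn⟩ := Set.ncard_eq_two.1 h2
  have hm : ∀ x, F.Adj x w ↔ x = a ∨ x = b := by
    intro x
    rw [F.adj_comm, ← mem_neighborSet, hn]; simp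
  have ha : a = ι₁ u₁ ∨ a = ι₂ u₂ ∨ a = ι₃ u₃ := hsub (by rw [hn]; simp)
  have hb : b = ι₁ u₁ ∨ b = ι₂ u₂ ∨ b = ι₃ u₃ := hsub (by rw [hn]; simp)
  have key : (¬ F.Adj (ι₁ u₁) w ∧ F.Adj (ι₂ u₂) w ∧ F.Adj (ι₃ u₃) w) ∨
      (¬ F.Adj (ι₂ u₂) w ∧ F.Adj (ι₁ u₁) w ∧ F.Adj (ι₃ u₃) w) ∨
      (¬ F.Adj (ι₃ u₃) w ∧ F.Adj (ι₁ u₁) w ∧ F.Adj (ι₂ u₂) w) := by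
    simp only [hm]
    grind
  rcases key with ⟨a, b, c⟩ | ⟨a, b, c⟩ | ⟨a, b, c⟩
  · exact Or.inl (aux_split P₁ P₂ P₃ h₁ h₂ h₃ hcov F hF a b c)
  · exact Or.inr (Or.inl (aux_split P₂ P₁ P₃ h₂ h₁ h₃
      (fun b => by rcases hcov b with h | h | h | h <;> simp only [h, true_or, or_true]) F hF a b c))
  · exact Or.inr (Or.inr (aux_split P₃ P₁ P₂ h₃ h₁ h₂
      (fun b => by rcases hcov b with h | h | h | h <;> simp only [h, true_or, or_true]) F hF a b c))
end

/-- for `i = 1, 2, 3` let `Gᵢ` be a 2-factor Hamiltonian cubic bipartite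
graph with `k` vertices and let `eᵢ = uᵢvᵢ` be an edge of `Gᵢ`.  Let `G` be the graph
(on the vertex set `(V₁ ⊕ V₂ ⊕ V₃) ⊕ Bool`, where `inr true = w` and `inr false = z`)
obtained from the disjoint union of the graphs `Gᵢ - eᵢ` by adding two new vertices `w`
and `z` and the six new edges `wuᵢ` and `zvᵢ`, `i = 1, 2, 3`.  Then `G` is a connected
cubic bipartite graph of edge-connectivity two which is 2-factor isomorphic but not
Hamiltonian. -/
theorem stmt_9 {V₁ V₂ V₃ : Type*} [Fintype V₁] [Fintype V₂] [Fintype V₃] (k : ℕ)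
    (G₁ : SimpleGraph V₁) (G₂ : SimpleGraph V₂) (G₃ : SimpleGraph V₃)
    (hk₁ : Fintype.card V₁ = k) (hk₂ : Fintype.card V₂ = k) (hk₃ : Fintype.card V₃ = k)
    (hcub₁ : ∀ v, (G₁.neighborSet v).ncard = 3) (hbip₁ : G₁.Colorable 2)
    (h2fh₁ : TwoFactorHamiltonian G₁)
    (hcub₂ : ∀ v, (G₂.neighborSet v).ncard = 3) (hbip₂ : G₂.Colorable 2)
    (h2fh₂ : TwoFactorHamiltonian G₂)
    (hcub₃ : ∀ v, (G₃.neighborSet v).ncard = 3) (hbip₃ : G₃.Colorable 2)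
    (h2fh₃ : TwoFactorHamiltonian G₃)
    (u₁ v₁ : V₁) (u₂ v₂ : V₂) (u₃ v₃ : V₃)
    (he₁ : G₁.Adj u₁ v₁) (he₂ : G₂.Adj u₂ v₂) (he₃ : G₃.Adj u₃ v₃)
    (G : SimpleGraph ((V₁ ⊕ V₂ ⊕ V₃) ⊕ Bool))
    (hG : ∀ a b : (V₁ ⊕ V₂ ⊕ V₃) ⊕ Bool, G.Adj a b ↔
      ((∃ p q : V₁, a = Sum.inl (Sum.inl p) ∧ b = Sum.inl (Sum.inl q) ∧
          G₁.Adj p q ∧ s(p, q) ≠ s(u₁, v₁)) ∨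
       (∃ p q : V₂, a = Sum.inl (Sum.inr (Sum.inl p)) ∧ b = Sum.inl (Sum.inr (Sum.inl q)) ∧
          G₂.Adj p q ∧ s(p, q) ≠ s(u₂, v₂)) ∨
       (∃ p q : V₃, a = Sum.inl (Sum.inr (Sum.inr p)) ∧ b = Sum.inl (Sum.inr (Sum.inr q)) ∧
          G₃.Adj p q ∧ s(p, q) ≠ s(u₃, v₃)) ∨
       (a = Sum.inr true ∧ (b = Sum.inl (Sum.inl u₁) ∨
          b = Sum.inl (Sum.inr (Sum.inl u₂)) ∨ b = Sum.inl (Sum.inr (Sum.inr u₃)))) ∨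
       (b = Sum.inr true ∧ (a = Sum.inl (Sum.inl u₁) ∨
          a = Sum.inl (Sum.inr (Sum.inl u₂)) ∨ a = Sum.inl (Sum.inr (Sum.inr u₃)))) ∨
       (a = Sum.inr false ∧ (b = Sum.inl (Sum.inl v₁) ∨
          b = Sum.inl (Sum.inr (Sum.inl v₂)) ∨ b = Sum.inl (Sum.inr (Sum.inr v₃)))) ∨
       (b = Sum.inr false ∧ (a = Sum.inl (Sum.inl v₁) ∨
          a = Sum.inl (Sum.inr (Sum.inl v₂)) ∨ a = Sum.inl (Sum.inr (Sum.inr v₃)))))) :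
    G.Connected ∧ (∀ v, (G.neighborSet v).ncard = 3) ∧ G.Colorable 2 ∧
      EdgeConnectivityTwo G ∧ TwoFactorIsomorphic G ∧
      ¬ ∃ H, IsTwoFactor G H ∧ H.Connected := by
  classical
  let ι₁ : V₁ → (V₁ ⊕ V₂ ⊕ V₃) ⊕ Bool := fun x => Sum.inl (Sum.inl x)
  let ι₂ : V₂ → (V₁ ⊕ V₂ ⊕ V₃) ⊕ Bool := fun x => Sum.inl (Sum.inr (Sum.inl x))
  let ι₃ : V₃ → (V₁ ⊕ V₂ ⊕ V₃) ⊕ Bool := fun x => Sum.inl (Sum.inr (Sum.inr x))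
  have i₁ : Function.Injective ι₁ := fun x y h => by simpa [ι₁] using h
  have i₂ : Function.Injective ι₂ := fun x y h => by simpa [ι₂] using h
  have i₃ : Function.Injective ι₃ := fun x y h => by simpa [ι₃] using h
  have P₁ : AuxPiece G G₁ ι₁ u₁ v₁ (Sum.inr true) (Sum.inr false) := by
    refine ⟨i₁, ?_, ?_, ?_, ?_, ?_, ?_, by simp, he₁⟩
    · intro x y; simp [hG, ι₁]
    · intro x b h
      rw [hG] at h
      simp only [ι₁] at h ⊢
      rcases h with ⟨p, q, h, rfl, -⟩ | ⟨p, q, h, -⟩ | ⟨p, q, h, -⟩ | ⟨h, -⟩ | ⟨rfl, h⟩ | ⟨h, -⟩ | ⟨rfl, h⟩ <;>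
        simp at h ⊢ <;> assumption
    · simp [hG, ι₁]
    · simp [hG, ι₁]
    · simp [ι₁]
    · simp [ι₁]
  have P₂ : AuxPiece G G₂ ι₂ u₂ v₂ (Sum.inr true) (Sum.inr false) := by
    refine ⟨i₂, ?_, ?_, ?_, ?_, ?_, ?_, by simp, he₂⟩
    · intro x y; simp [hG, ι₂]
    · intro x b h
      rw [hG] at h
      simp only [ι₂] at h ⊢
      rcases h with ⟨p, q, h, -⟩ | ⟨p, q, h, rfl, -⟩ | ⟨p, q, h, -⟩ | ⟨h, -⟩ | ⟨rfl, h⟩ | ⟨h, -⟩ | ⟨rfl, h⟩ <;>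
        simp at h ⊢ <;> assumption
    · simp [hG, ι₂]
    · simp [hG, ι₂]
    · simp [ι₂]
    · simp [ι₂]
  have P₃ : AuxPiece G G₃ ι₃ u₃ v₃ (Sum.inr true) (Sum.inr false) := by
    refine ⟨i₃, ?_, ?_, ?_, ?_, ?_, ?_, by simp, he₃⟩
    · intro x y; simp [hG, ι₃]
    · intro x b h
      rw [hG] at h
      simp only [ι₃] at h ⊢
      rcases h with ⟨p, q, h, -⟩ | ⟨p, q, h, -⟩ | ⟨p, q, h, rfl, -⟩ | ⟨h, -⟩ | ⟨rfl, h⟩ | ⟨h, -⟩ | ⟨rfl, h⟩ <;>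
        simp at h ⊢ <;> assumption
    · simp [hG, ι₃]
    · simp [hG, ι₃]
    · simp [ι₃]
    · simp [ι₃]
  have hcov : ∀ b : (V₁ ⊕ V₂ ⊕ V₃) ⊕ Bool, (∃ x, b = ι₁ x) ∨ (∃ x, b = ι₂ x) ∨ (∃ x, b = ι₃ x) ∨
      b = Sum.inr true ∨ b = Sum.inr false := by
    rintro ((x | x | x) | (_ | _)) <;> simp [ι₁, ι₂, ι₃]
  have d₁₂ : ι₁ u₁ ≠ ι₂ u₂ := by simp [ι₁, ι₂]
  have d₁₃ : ι₁ u₁ ≠ ι₃ u₃ := by simp [ι₁, ι₃]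
  have d₂₃ : ι₂ u₂ ≠ ι₃ u₃ := by simp [ι₂, ι₃]
  have hw : ∀ b, G.Adj b (Sum.inr true) ↔ b = ι₁ u₁ ∨ b = ι₂ u₂ ∨ b = ι₃ u₃ := by
    intro b; simp [hG, ι₁, ι₂, ι₃]
  have hz : ∀ b, G.Adj b (Sum.inr false) ↔ b = ι₁ v₁ ∨ b = ι₂ v₂ ∨ b = ι₃ v₃ := by
    intro b; simp [hG, ι₁, ι₂, ι₃]
  -- cubic
  have hcub : ∀ v, (G.neighborSet v).ncard = 3 := by
    intro b
    rcases hcov b with ⟨x, rfl⟩ | ⟨x, rfl⟩ | ⟨x, rfl⟩ | rfl | rfl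
    · exact P₁.cubic hcub₁ x
    · exact P₂.cubic hcub₂ x
    · exact P₃.cubic hcub₃ x
    · rw [Set.ncard_eq_three]
      refine ⟨ι₁ u₁, ι₂ u₂, ι₃ u₃, d₁₂, d₁₃, d₂₃, ?_⟩
      ext b
      rw [mem_neighborSet, G.adj_comm, hw]; simp
    · rw [Set.ncard_eq_three]
      refine ⟨ι₁ v₁, ι₂ v₂, ι₃ v₃, by simp [ι₁, ι₂], by simp [ι₁, ι₃], by simp [ι₂, ι₃], ?_⟩
      ext b
      rw [mem_neighborSet, G.adj_comm, hz]; simp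
  -- bipartite
  have hbip : G.Colorable 2 := by
    obtain ⟨C₁⟩ := hbip₁
    obtain ⟨C₂⟩ := hbip₂
    obtain ⟨C₃⟩ := hbip₃
    have n₁ := C₁.valid he₁
    have n₂ := C₂.valid he₂
    have n₃ := C₃.valid he₃
    let c : (V₁ ⊕ V₂ ⊕ V₃) ⊕ Bool → Bool := Sum.elim
      (Sum.elim (fun x => decide (C₁ x = C₁ u₁)) (Sum.elim (fun x => decide (C₂ x = C₂ u₂))
        (fun x => decide (C₃ x = C₃ u₃)))) (fun b => !b)
    have hfin : ∀ i j k : Fin 2, i ≠ j → decide (i = k) ≠ decide (j = k) := by decide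
    have hc : ∀ {a b}, G.Adj a b → c a ≠ c b := by
      intro a b h
      rw [hG] at h
      rcases h with ⟨p, q, rfl, rfl, h, -⟩ | ⟨p, q, rfl, rfl, h, -⟩ | ⟨p, q, rfl, rfl, h, -⟩ |
        ⟨rfl, rfl | rfl | rfl⟩ | ⟨rfl, rfl | rfl | rfl⟩ | ⟨rfl, rfl | rfl | rfl⟩ |
        ⟨rfl, rfl | rfl | rfl⟩
      · exact hfin _ _ _ (C₁.valid h)
      · exact hfin _ _ _ (C₂.valid h)
      · exact hfin _ _ _ (C₃.valid h)
      all_goals simp [c, n₁.symm, n₂.symm, n₃.symm]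
    have := (Coloring.mk c hc).colorable
    simpa using this
  have k₁ : (G.comap ι₁).Connected := by
    rw [P₁.comap_eq]
    obtain ⟨⟨F, hF⟩, h⟩ := h2fh₁
    exact aux_cubic_delete G₁ hcub₁ hbip₁ ((h F hF).mono hF.1) he₁
  have k₂ : (G.comap ι₂).Connected := by
    rw [P₂.comap_eq]
    obtain ⟨⟨F, hF⟩, h⟩ := h2fh₂
    exact aux_cubic_delete G₂ hcub₂ hbip₂ ((h F hF).mono hF.1) he₂
  have k₃ : (G.comap ι₃).Connected := by
    rw [P₃.comap_eq]
    obtain ⟨⟨F, hF⟩, h⟩ := h2fh₃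
    exact aux_cubic_delete G₃ hcub₃ hbip₃ ((h F hF).mono hF.1) he₃
  have hconn : G.Connected := by
    rw [connected_iff_exists_forall_reachable]
    refine ⟨Sum.inr true, fun b => ?_⟩
    rcases hcov b with ⟨x, rfl⟩ | ⟨x, rfl⟩ | ⟨x, rfl⟩ | rfl | rfl
    · exact AuxPiece.reach G k₁ P₁.aw x
    · exact AuxPiece.reach G k₂ P₂.aw x
    · exact AuxPiece.reach G k₃ P₃.aw x
    · exact Reachable.refl _
    · exact (AuxPiece.reach G k₁ P₁.aw v₁).trans (Adj.reachable P₁.az)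
  have hsplit := aux_split_any P₁ P₂ P₃ h2fh₁ h2fh₂ h2fh₃ hcov d₁₂ d₁₃ d₂₃ (fun b => (hw b).1)
  have hcard : ∀ F, IsTwoFactor G F → ∃ S, S.ncard = k ∧ AuxSplit F S := by
    intro F hF
    rcases hsplit F hF with h | h | h
    · refine ⟨_, ?_, h⟩
      rw [← Set.image_univ, Set.ncard_image_of_injective _ i₁, Set.ncard_univ,
        Nat.card_eq_fintype_card, hk₁]
    · refine ⟨_, ?_, h⟩
      rw [← Set.image_univ, Set.ncard_image_of_injective _ i₂, Set.ncard_univ,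
        Nat.card_eq_fintype_card, hk₂]
    · refine ⟨_, ?_, h⟩
      rw [← Set.image_univ, Set.ncard_image_of_injective _ i₃, Set.ncard_univ,
        Nat.card_eq_fintype_card, hk₃]
  refine ⟨hconn, hcub, hbip, ⟨hconn, ?_, ?_⟩, ⟨aux_cubic_factor G hcub hbip, ?_⟩, ?_⟩
  · intro e he
    induction e using Sym2.ind with
    | _ a b => exact aux_cubic_delete G hcub hbip hconn he
  · refine ⟨{s(ι₁ u₁, Sum.inr true), s(ι₁ v₁, Sum.inr false)}, ?_, ?_, ?_⟩
    · rintro e (rfl | rfl)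
      · exact P₁.aw
      · exact P₁.az
    · rw [Set.ncard_pair]
      simp [Sym2.eq_iff, ι₁]
    · refine aux_not_conn _ (Set.range ι₁) ?_ (a := ι₁ u₁) (b := Sum.inr true) ⟨u₁, rfl⟩
        (by rintro ⟨x, hx⟩; exact P₁.nw x hx)
      rintro _ ⟨x, rfl⟩ y h
      rw [deleteEdges_adj] at h
      obtain ⟨h, hne⟩ := h
      rcases P₁.out x y h with ⟨y, rfl⟩ | ⟨rfl, rfl⟩ | ⟨rfl, rfl⟩
      · exact ⟨y, rfl⟩
      · exact absurd (Or.inl rfl) hne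
      · exact absurd (Or.inr rfl) hne
  · intro F F' hF hF'
    obtain ⟨S, hS, h⟩ := hcard F hF
    obtain ⟨S', hS', h'⟩ := hcard F' hF'
    exact aux_glue F F' hF.2 hF'.2 S S' (hS.trans hS'.symm) h h'
  · rintro ⟨F, hF, hc⟩
    obtain ⟨S, -, h1, h2, h3⟩ := hcard F hF
    obtain ⟨a, ha⟩ := h2.nonempty
    obtain ⟨b, hb⟩ := h3.nonempty
    exact aux_not_conn F S h1 ha hb hc
end

section
/- Let G be an essentially 4-edge-connected pseudo 2-factor isomorphic cubic bipartite graph. If G contains a cycle of length 4, then G is isomorphic to K_{3,3}. -/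
open SimpleGraph

/-- The number of cycles of a 2-factor `F` is the number of its connected components. -/
noncomputable def numCycles {V : Type*} (F : SimpleGraph V) : ℕ :=
  Nat.card F.ConnectedComponent

/-- A graph admitting a 2-factor is pseudo 2-factor isomorphic if the parity of the
number of cycles in a 2-factor is the same for all of its 2-factors. -/
def PseudoTwoFactorIsomorphic {V : Type*} (G : SimpleGraph V) : Prop :=
  (∃ F, IsTwoFactor G F) ∧
    ∀ F F', IsTwoFactor G F → IsTwoFactor G F' → numCycles F % 2 = numCycles F' % 2

/-- `G` is 3-edge-connected: it is connected and deleting any set of at most two of its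
edges leaves it connected. -/
def ThreeEdgeConnected {V : Type*} (G : SimpleGraph V) : Prop :=
  G.Connected ∧ ∀ E₁ : Set (Sym2 V), E₁ ⊆ G.edgeSet → E₁.ncard ≤ 2 →
    (G.deleteEdges E₁).Connected

/-- `G` is essentially 4-edge-connected: it is 3-edge-connected and has no non-trivial
3-edge-cut, i.e. every set of 3 edges whose deletion disconnects `G` leaves a component
with fewer than two vertices. -/
def EssentiallyFourEdgeConnected {V : Type*} (G : SimpleGraph V) : Prop :=
  ThreeEdgeConnected G ∧ ∀ E₁ : Set (Sym2 V), E₁ ⊆ G.edgeSet → E₁.ncard = 3 →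
    ¬ (G.deleteEdges E₁).Connected →
      ∃ c : (G.deleteEdges E₁).ConnectedComponent, c.supp.ncard < 2

open Classical in
/-- The union of two matchings `f`, `g` as a graph. -/
def unionGraph {V : Type*} (p : V → Prop) (f g : {v // p v} ≃ {v // ¬ p v}) : SimpleGraph V where
  Adj x y := (∃ a : {v // p v}, x = a ∧ (y = f a ∨ y = g a)) ∨
    (∃ a : {v // p v}, y = a ∧ (x = f a ∨ x = g a))
  symm := ⟨fun x y h => h.symm⟩
  loopless := ⟨by
    rintro x (⟨a, rfl, h | h⟩ | ⟨a, rfl, h | h⟩)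
    · exact (f a).2 (h ▸ a.2)
    · exact (g a).2 (h ▸ a.2)
    · exact (f a).2 (h ▸ a.2)
    · exact (g a).2 (h ▸ a.2)⟩

lemma unionGraph_two {V : Type*} (p : V → Prop) (f g : {v // p v} ≃ {v // ¬ p v})
    (hne : ∀ a, f a ≠ g a) (v : V) : ((unionGraph p f g).neighborSet v).ncard = 2 := by
  by_cases hv : p v
  · have : (unionGraph p f g).neighborSet v = {(f ⟨v, hv⟩ : V), (g ⟨v, hv⟩ : V)} := by
      ext y
      simp only [SimpleGraph.mem_neighborSet, unionGraph, Set.mem_insert_iff, Set.mem_singleton_iff]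
      constructor
      · rintro (⟨a, rfl, h⟩ | ⟨a, rfl, h | h⟩)
        · exact h
        · exact absurd (h ▸ hv) (f a).2
        · exact absurd (h ▸ hv) (g a).2
      · intro h
        exact Or.inl ⟨⟨v, hv⟩, rfl, h⟩
    rw [this, Set.ncard_pair]
    exact fun h => hne _ (Subtype.ext h)
  · have : (unionGraph p f g).neighborSet v =
        {(f.symm ⟨v, hv⟩ : V), (g.symm ⟨v, hv⟩ : V)} := by
      ext y
      simp only [SimpleGraph.mem_neighborSet, unionGraph, Set.mem_insert_iff, Set.mem_singleton_iff]
      constructor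
      · rintro (⟨a, rfl, h⟩ | ⟨a, rfl, h | h⟩)
        · exact absurd a.2 hv
        · left; congr 1; rw [Equiv.eq_symm_apply]; exact Subtype.ext h.symm
        · right; congr 1; rw [Equiv.eq_symm_apply]; exact Subtype.ext h.symm
      · rintro (h | h)
        · exact Or.inr ⟨_, h, Or.inl (by simp)⟩
        · exact Or.inr ⟨_, h, Or.inr (by simp)⟩
    rw [this, Set.ncard_pair]
    intro h
    have h' := Subtype.ext h
    apply hne (f.symm ⟨v, hv⟩)
    rw [Equiv.apply_symm_apply, h', Equiv.apply_symm_apply]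

open Classical in
lemma unionGraph_numCycles {V : Type*} [Fintype V] (p : V → Prop)
    (f g : {v // p v} ≃ {v // ¬ p v}) (hne : ∀ a, f a ≠ g a) :
    numCycles (unionGraph p f g) = (Equiv.Perm.cycleType (f.trans g.symm : Equiv.Perm {v // p v})).card := by
  set π : Equiv.Perm {v // p v} := f.trans g.symm with hπ
  have hπa : ∀ a, π a = g.symm (f a) := fun a => rfl
  let φ : V → {v // p v} := fun v => if hv : p v then ⟨v, hv⟩ else g.symm ⟨v, hv⟩
  have hφA : ∀ a : {v // p v}, φ a = a := fun a => by simp [φ, a.2]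
  have hφB : ∀ b : {v // ¬ p v}, φ b = g.symm b := fun b => by simp [φ, b.2]
  have hadj : ∀ x y, (unionGraph p f g).Adj x y → π.SameCycle (φ x) (φ y) := by
    rintro x y (⟨a, rfl, rfl | rfl⟩ | ⟨a, rfl, rfl | rfl⟩)
    · rw [hφA, hφB, ← hπa]; exact ⟨1, by simp⟩
    · rw [hφA, hφB]; simp [Equiv.Perm.SameCycle.refl]
    · rw [hφA, hφB, ← hπa]; exact Equiv.Perm.SameCycle.symm ⟨1, by simp⟩
    · rw [hφA, hφB]; simp [Equiv.Perm.SameCycle.refl]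
  have hreach : ∀ x y, (unionGraph p f g).Reachable x y → π.SameCycle (φ x) (φ y) := by
    rintro x y ⟨w⟩
    induction w with
    | nil => exact Equiv.Perm.SameCycle.refl _ _
    | cons h _ ih => exact (hadj _ _ h).trans ih
  have hf : ∀ a : {v // p v}, (unionGraph p f g).Adj a (f a) := fun a => Or.inl ⟨a, rfl, Or.inl rfl⟩
  have hg : ∀ a : {v // p v}, (unionGraph p f g).Adj a (g a) := fun a => Or.inl ⟨a, rfl, Or.inr rfl⟩
  have hstep : ∀ a : {v // p v}, (unionGraph p f g).Reachable (a : V) (π a : V) := by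
    intro a
    have h2 := hg (π a)
    rw [hπa, Equiv.apply_symm_apply] at h2
    exact (hf a).reachable.trans h2.symm.reachable
  have hpow : ∀ (n : ℕ) (a : {v // p v}), (unionGraph p f g).Reachable (a : V) ((π ^ n) a : V) := by
    intro n
    induction n with
    | zero => intro a; exact SimpleGraph.Reachable.refl _
    | succ n ih => intro a; rw [pow_succ', Equiv.Perm.mul_apply]; exact (ih a).trans (hstep _)
  have hback : ∀ a b, π.SameCycle a b → (unionGraph p f g).Reachable (a : V) (b : V) := by
    intro a b h
    obtain ⟨n, -, -, hn⟩ := h.exists_pow_eq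
    rw [← hn]; exact hpow n a
  have hself : ∀ x, (unionGraph p f g).Reachable x (φ x) := by
    intro x
    by_cases hx : p x
    · have := hφA ⟨x, hx⟩
      simp only at this
      rw [this]
    · have := hφB ⟨x, hx⟩
      simp only at this
      rw [this]
      have := (hg (g.symm ⟨x, hx⟩)).symm.reachable
      simpa using this
  have hnf : ∀ a, π a ≠ a := by
    intro a h
    rw [hπa, Equiv.symm_apply_eq] at h
    exact hne a h
  have e : (unionGraph p f g).ConnectedComponent ≃ π.cycleFactorsFinset := by
    refine Equiv.ofBijective (fun c => ⟨c.lift (fun v => π.cycleOf (φ v)) ?_, ?_⟩) ⟨?_, ?_⟩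
    · intro v w q _
      exact (hreach v w ⟨q⟩).cycleOf_eq
    · induction c using SimpleGraph.ConnectedComponent.ind with
      | _ v =>
        simp only [SimpleGraph.ConnectedComponent.lift_mk]
        rw [Equiv.Perm.cycleOf_mem_cycleFactorsFinset_iff, Equiv.Perm.mem_support]
        exact hnf _
    · intro c d h
      induction c using SimpleGraph.ConnectedComponent.ind with
      | _ v =>
      induction d using SimpleGraph.ConnectedComponent.ind with
      | _ w =>
        simp only [SimpleGraph.ConnectedComponent.lift_mk, Subtype.mk.injEq] at h
        have : π.SameCycle (φ v) (φ w) := by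
          rw [Equiv.Perm.sameCycle_iff_cycleOf_eq_of_mem_support]
          · exact h
          · rw [Equiv.Perm.mem_support]; exact hnf _
          · rw [Equiv.Perm.mem_support]; exact hnf _
        rw [SimpleGraph.ConnectedComponent.eq]
        exact ((hself v).trans (hback _ _ this)).trans (hself w).symm
    · rintro ⟨τ, hτ⟩
      have hτ' := hτ
      rw [Equiv.Perm.mem_cycleFactorsFinset_iff] at hτ
      obtain ⟨a, ha⟩ := hτ.1.nonempty_support
      refine ⟨(unionGraph p f g).connectedComponentMk a, ?_⟩
      simp only [SimpleGraph.ConnectedComponent.lift_mk, Subtype.mk.injEq]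
      rw [hφA]
      exact (Equiv.Perm.cycle_is_cycleOf ha hτ').symm
  rw [numCycles, Nat.card_congr e]
  simp [Equiv.Perm.cycleType_def]

open Classical in
lemma unionGraph_sign {V : Type*} [Fintype V] (p : V → Prop)
    (f g : {v // p v} ≃ {v // ¬ p v}) (hne : ∀ a, f a ≠ g a) :
    Equiv.Perm.sign (f.trans g.symm : Equiv.Perm {v // p v}) =
      (-1) ^ (Fintype.card {v // p v} + numCycles (unionGraph p f g)) := by
  rw [unionGraph_numCycles p f g hne, Equiv.Perm.sign_of_cycleType, Equiv.Perm.sum_cycleType]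
  congr 2
  rw [← Finset.card_univ]
  congr 1
  ext a
  simp only [Equiv.Perm.mem_support, Finset.mem_univ, iff_true]
  intro h
  rw [Equiv.trans_apply, Equiv.symm_apply_eq] at h
  exact hne a h

open Classical in
/-- Swapping two values of one of the matchings changes the parity of the number of cycles. -/
lemma unionGraph_swap {V : Type*} [Fintype V] (p : V → Prop)
    (f g : {v // p v} ≃ {v // ¬ p v}) (hne : ∀ a, f a ≠ g a)
    (x y : {v // p v}) (hxy : x ≠ y) (hne' : ∀ a, f a ≠ ((Equiv.swap x y).trans g) a) :
    numCycles (unionGraph p f g) % 2 ≠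
      numCycles (unionGraph p f ((Equiv.swap x y).trans g)) % 2 := by
  intro h
  have h1 := unionGraph_sign p f g hne
  have h2 := unionGraph_sign p f _ hne'
  have h3 : (f.trans ((Equiv.swap x y).trans g).symm : Equiv.Perm {v // p v}) =
      Equiv.swap x y * (f.trans g.symm) := by
    ext a; simp [Equiv.Perm.mul_apply]
  rw [h3, Equiv.Perm.sign_mul, Equiv.Perm.sign_swap hxy, h1] at h2
  have h4 : ((-1 : ℤˣ)) ^ (Fintype.card {v // p v} + numCycles (unionGraph p f g)) =
      (-1) ^ (Fintype.card {v // p v} +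
        numCycles (unionGraph p f ((Equiv.swap x y).trans g))) := by
    apply neg_one_pow_congr
    rw [Nat.even_iff, Nat.even_iff]
    omega
  rw [← h4] at h2
  rcases neg_one_pow_eq_or ℤˣ (Fintype.card {v // p v} + numCycles (unionGraph p f g)) with h | h
    <;> rw [h] at h2 <;> revert h2 <;> decide

/-- A set of vertices closed under adjacency is trivial in a connected graph. -/
lemma closed_of_connected {V : Type*} {H : SimpleGraph V} (hc : H.Connected) (Q : V → Prop)
    (hQ : ∀ x y, H.Adj x y → Q x → Q y) {x y : V} (hx : Q x) : Q y := by
  obtain ⟨w⟩ := hc.preconnected x y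
  induction w with
  | nil => exact hx
  | cons h _ ih => exact ih (hQ _ _ h hx)

lemma cut_lemma {V : Type*} [Fintype V] (G : SimpleGraph V)
    (hcubic : ∀ v : V, (G.neighborSet v).ncard = 3)
    (hess : EssentiallyFourEdgeConnected G) (P : V → Prop) {a b c d : V}
    (hab : a ≠ b) (hcd : c ≠ d) (ha : P a) (hb : P b) (hc : ¬ P c) (hd : ¬ P d)
    (hcut : {e : V × V | G.Adj e.1 e.2 ∧ P e.1 ∧ ¬ P e.2}.ncard ≤ 3) : False := by
  set D := {e : V × V | G.Adj e.1 e.2 ∧ P e.1 ∧ ¬ P e.2} with hD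
  set E : Set (Sym2 V) := (fun e : V × V => s(e.1, e.2)) '' D with hE
  have hE3 : E.ncard ≤ 3 := (Set.ncard_image_le (Set.toFinite _)).trans hcut
  have hEsub : E ⊆ G.edgeSet := by
    rintro _ ⟨e, he, rfl⟩
    exact he.1
  have hmem : ∀ x y, G.Adj x y → P x → ¬ P y → s(x, y) ∈ E := fun x y h1 h2 h3 =>
    ⟨(x, y), ⟨h1, h2, h3⟩, rfl⟩
  have hmem' : ∀ x y, s(x, y) ∈ E → (P x ↔ ¬ P y) := by
    rintro x y ⟨⟨u, v⟩, ⟨-, h2, h3⟩, h⟩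
    simp only [Sym2.eq_iff] at h
    simp only at h2 h3
    rcases h with ⟨rfl, rfl⟩ | ⟨rfl, rfl⟩ <;> tauto
  have hncon : ¬ (G.deleteEdges E).Connected := by
    intro h
    refine hc (closed_of_connected h P ?_ ha)
    intro x y hxy hx
    rw [SimpleGraph.deleteEdges_adj] at hxy
    by_contra hy
    exact hxy.2 (hmem x y hxy.1 hx hy)
  obtain ⟨⟨hconn, h2⟩, h3⟩ := hess
  rcases Nat.lt_or_ge E.ncard 3 with hlt | hge
  · exact hncon (h2 E hEsub (by omega))
  have hEc : E.ncard = 3 := le_antisymm hE3 hge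
  obtain ⟨K, hK⟩ := h3 E hEsub hEc hncon
  obtain ⟨v, rfl⟩ := K.exists_rep
  have hdel : ∀ y, G.Adj v y → s(v, y) ∈ E := by
    intro y hy
    by_contra hn
    have hadj : (G.deleteEdges E).Adj v y := by
      rw [SimpleGraph.deleteEdges_adj]; exact ⟨hy, hn⟩
    have : ({v, y} : Set V) ⊆ ((G.deleteEdges E).connectedComponentMk v).supp := by
      rintro z (rfl | rfl)
      · simp
      · simp only [SimpleGraph.ConnectedComponent.mem_supp_iff, SimpleGraph.ConnectedComponent.eq]
        exact hadj.symm.reachable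
    have h5 := Set.ncard_le_ncard this (Set.toFinite _)
    rw [Set.ncard_pair hy.ne] at h5
    have hK' : ((G.deleteEdges E).connectedComponentMk v).supp.ncard < 2 := hK
    omega
  have hEeq : (fun y => s(v, y)) '' (G.neighborSet v) = E := by
    apply Set.eq_of_subset_of_ncard_le
    · rintro _ ⟨y, hy, rfl⟩
      exact hdel y hy
    · rw [hEc, Set.ncard_image_of_injective, hcubic]
      intro y z h
      have h' : s(v, y) = s(v, z) := h
      exact Sym2.congr_right.1 h'
    · exact Set.toFinite _
  have hv : ∀ x y, s(x, y) ∈ E → x = v ∨ y = v := by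
    intro x y h
    rw [← hEeq] at h
    obtain ⟨z, -, hz⟩ := h
    simp only [Sym2.eq_iff] at hz
    rcases hz with ⟨h, -⟩ | ⟨h, -⟩
    · exact Or.inl h.symm
    · exact Or.inr h.symm
  -- the side of `v`, without `v`, is closed
  have key : ∀ Q : V → Prop, (∀ x y, s(x, y) ∈ E → (Q x ↔ ¬ Q y)) →
      (∀ x y, G.Adj x y → Q x → ¬ Q y → s(x, y) ∈ E) → Q v → ∀ z, Q z → z ≠ v → False := by
    intro Q hQ1 hQ2 hQv z hz hzv
    have : Q v ∧ v ≠ v := by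
      refine closed_of_connected hconn (fun x => Q x ∧ x ≠ v) ?_ (x := z) ⟨hz, hzv⟩
      rintro x y hxy ⟨hx, hxv⟩
      have hyv : y ≠ v := by
        rintro rfl
        have := hQ1 _ _ (hdel x hxy.symm)
        tauto
      refine ⟨?_, hyv⟩
      by_contra hy
      rcases hv x y (hQ2 x y hxy hx hy) with h | h
      · exact hxv h
      · exact hyv h
    exact this.2 rfl
  by_cases hPv : P v
  · have := key P hmem' hmem hPv
    by_cases h : a = v
    · exact this b hb (fun h' => hab (h.trans h'.symm))
    · exact this a ha h
  · have := key (fun x => ¬ P x) (fun x y h => by have := hmem' x y h; tauto)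
      (fun x y h h1 h2 => by rw [Sym2.eq_swap]; exact hmem y x h.symm (not_not.1 h2) h1) hPv
    by_cases h : c = v
    · exact this d hd (fun h' => hcd (h.trans h'.symm))
    · exact this c hc h

open Classical in
/-- The neighbours of a vertex, as a finset. -/
noncomputable def nb {V : Type*} [Fintype V] (G : SimpleGraph V) (x : V) : Finset V :=
  Finset.univ.filter (fun y => G.Adj x y)

lemma mem_nb {V : Type*} [Fintype V] (G : SimpleGraph V) (x y : V) : y ∈ nb G x ↔ G.Adj x y := by
  simp [nb]

lemma card_nb {V : Type*} [Fintype V] (G : SimpleGraph V)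
    (hcubic : ∀ v : V, (G.neighborSet v).ncard = 3) (x : V) : (nb G x).card = 3 := by
  rw [← hcubic x, ← Set.ncard_coe_finset]
  congr 1
  ext y
  simp [mem_nb]

open Classical in
lemma card_darts {V : Type*} [Fintype V] (G : SimpleGraph V)
    (hcubic : ∀ v : V, (G.neighborSet v).ncard = 3) (W : Finset V) :
    (Finset.univ.filter (fun e : V × V => e.1 ∈ W ∧ G.Adj e.1 e.2)).card = 3 * W.card := by
  rw [Finset.card_eq_sum_card_fiberwise (f := Prod.fst) (t := W)]
  · rw [Finset.sum_congr rfl (g := fun _ => 3)]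
    · simp [mul_comm]
    · intro w hw
      rw [← card_nb G hcubic w]
      rw [← Finset.card_map (⟨fun y => (w, y), Prod.mk_right_injective w⟩ : V ↪ V × V)]
      congr 1
      ext ⟨x, y⟩
      simp only [Finset.mem_filter, Finset.mem_univ, true_and, Finset.mem_map, mem_nb,
        Function.Embedding.coeFn_mk, Prod.mk.injEq]
      constructor
      · rintro ⟨⟨-, h⟩, rfl⟩
        exact ⟨y, h, rfl, rfl⟩
      · rintro ⟨z, h, rfl, rfl⟩
        exact ⟨⟨hw, h⟩, rfl⟩
  · intro e he
    simp only [Finset.coe_filter, Finset.mem_univ, true_and, Set.mem_ofPred_eq] at he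
    exact he.1

open Classical in
lemma card_darts' {V : Type*} [Fintype V] (G : SimpleGraph V)
    (hcubic : ∀ v : V, (G.neighborSet v).ncard = 3) (W : Finset V) :
    (Finset.univ.filter (fun e : V × V => e.2 ∈ W ∧ G.Adj e.1 e.2)).card = 3 * W.card := by
  rw [← card_darts G hcubic W]
  rw [← Finset.card_map (Equiv.prodComm V V).toEmbedding]
  congr 1
  ext ⟨x, y⟩
  simp [SimpleGraph.adj_comm]

open Classical in
lemma bip_cut {V : Type*} [Fintype V] (G : SimpleGraph V)
    (hcubic : ∀ v : V, (G.neighborSet v).ncard = 3)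
    (hess : EssentiallyFourEdgeConnected G) (S W : Finset V)
    (hSW : ∀ s ∈ S, ∀ y, G.Adj s y → y ∈ W) (hcard : W.card ≤ S.card + 1)
    {a b c d : V} (hab : a ≠ b) (hcd : c ≠ d) (ha : a ∈ S ∪ W) (hb : b ∈ S ∪ W)
    (hc : c ∉ S ∪ W) (hd : d ∉ S ∪ W) : False := by
  refine cut_lemma G hcubic hess (fun x => x ∈ S ∪ W) hab hcd ha hb hc hd ?_
  have h1 := card_darts G hcubic W
  have h2 := card_darts' G hcubic S
  set D1 := Finset.univ.filter (fun e : V × V => e.1 ∈ W ∧ G.Adj e.1 e.2)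
  set D2 := Finset.univ.filter (fun e : V × V => e.2 ∈ S ∧ G.Adj e.1 e.2)
  have hsub : D2 ⊆ D1 := by
    intro e he
    simp only [D1, D2, Finset.mem_filter, Finset.mem_univ, true_and] at he ⊢
    exact ⟨hSW _ he.1 _ he.2.symm, he.2⟩
  have h3 : {e : V × V | G.Adj e.1 e.2 ∧ e.1 ∈ S ∪ W ∧ ¬ e.2 ∈ S ∪ W} ⊆ ((D1 \ D2 : Finset _) : Set _) := by
    rintro e ⟨he1, he2, he3⟩
    simp only [D1, D2, Finset.mem_filter, Finset.mem_univ, true_and, Finset.coe_sdiff, Set.mem_sdiff,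
      Finset.mem_coe]
    rw [Finset.mem_union] at he2 he3
    push Not at he3
    refine ⟨⟨?_, he1⟩, fun h => he3.1 h.1⟩
    rcases he2 with h | h
    · exact absurd (hSW _ h _ he1) he3.2
    · exact h
  have h4 := Set.ncard_le_ncard h3 (Set.toFinite _)
  rw [Set.ncard_coe_finset, Finset.card_sdiff_of_subset hsub] at h4
  refine h4.trans ?_
  omega

open Classical in
lemma card_sides {V : Type*} [Fintype V] (G : SimpleGraph V)
    (hcubic : ∀ v : V, (G.neighborSet v).ncard = 3) (p : V → Prop)
    (hp : ∀ x y, G.Adj x y → (p x ↔ ¬ p y)) :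
    (Finset.univ.filter p).card = (Finset.univ.filter (fun x => ¬ p x)).card := by
  have h1 := card_darts G hcubic (Finset.univ.filter p)
  have h2 := card_darts' G hcubic (Finset.univ.filter (fun x => ¬ p x))
  have : (Finset.univ.filter (fun e : V × V => e.1 ∈ Finset.univ.filter p ∧ G.Adj e.1 e.2)) =
    (Finset.univ.filter (fun e : V × V => e.2 ∈ Finset.univ.filter (fun x => ¬ p x) ∧ G.Adj e.1 e.2)) := by
    ext e
    simp only [Finset.mem_filter, Finset.mem_univ, true_and]
    have := hp e.1 e.2
    tauto
  rw [this] at h1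
  omega

open Classical in
lemma equiv_of_inj {V : Type*} [Fintype V] (G : SimpleGraph V)
    (hcubic : ∀ v : V, (G.neighborSet v).ncard = 3) (p : V → Prop)
    (hp : ∀ x y, G.Adj x y → (p x ↔ ¬ p y)) (h : {v // p v} → V) (hinj : Function.Injective h)
    (hadj : ∀ a : {v // p v}, G.Adj a (h a)) :
    ∃ f : {v // p v} ≃ {v // ¬ p v}, ∀ a, (f a : V) = h a := by
  have hc : Fintype.card {v // p v} = Fintype.card {v // ¬ p v} := by
    rw [Fintype.card_subtype, Fintype.card_subtype]
    exact card_sides G hcubic p hp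
  let k : {v // p v} → {v // ¬ p v} := fun a => ⟨h a, (hp _ _ (hadj a)).1 a.2⟩
  have hk : Function.Injective k := by
    intro a b hab
    exact hinj (congrArg Subtype.val hab)
  exact ⟨Equiv.ofBijective k ((Fintype.bijective_iff_injective_and_card k).2 ⟨hk, hc⟩),
    fun a => rfl⟩

open Classical in
/-- First Hall argument: there is a perfect matching through any two given independent edges. -/
lemma exists_first {V : Type*} [Fintype V] (G : SimpleGraph V)
    (hcubic : ∀ v : V, (G.neighborSet v).ncard = 3)
    (hess : EssentiallyFourEdgeConnected G) (p : V → Prop)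
    (hp : ∀ x y, G.Adj x y → (p x ↔ ¬ p y)) (x y : {v // p v}) (u w : V) (hxy : x ≠ y)
    (huw : u ≠ w) (hu : G.Adj x u) (hw : G.Adj y w) :
    ∃ f : {v // p v} ≃ {v // ¬ p v}, (∀ a : {v // p v}, G.Adj a (f a)) ∧ (f x : V) = u ∧ (f y : V) = w := by
  have hall : ∃ h : {a : {v // p v} // a ≠ x ∧ a ≠ y} → V, Function.Injective h ∧
      ∀ a, h a ∈ nb G a.1 \ {u, w} := by
    rw [← Finset.all_card_le_biUnion_card_iff_exists_injective
      (fun a : {a : {v // p v} // a ≠ x ∧ a ≠ y} => nb G a.1 \ {u, w})]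
    intro s
    by_contra hlt
    push Not at hlt
    set T := s.biUnion (fun a : {a : {v // p v} // a ≠ x ∧ a ≠ y} => nb G a.1 \ {u, w}) with hT
    let S : Finset V := s.image (fun a => (a.1 : V))
    have hS : S.card = s.card := Finset.card_image_of_injective _
      (fun a b h => Subtype.ext (Subtype.ext h))
    have hpS : ∀ a ∈ S, p a ∧ a ≠ x ∧ a ≠ y := by
      intro a ha
      simp only [S, Finset.mem_image] at ha
      obtain ⟨b, -, rfl⟩ := ha
      exact ⟨b.1.2, fun h => b.2.1 (Subtype.ext h), fun h => b.2.2 (Subtype.ext h)⟩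
    have hpT : ∀ z ∈ T ∪ {u, w}, ¬ p z := by
      intro z hz
      simp only [hT, Finset.mem_union, Finset.mem_biUnion, Finset.mem_sdiff, mem_nb,
        Finset.mem_insert, Finset.mem_singleton] at hz
      rcases hz with ⟨a, -, ha, -⟩ | rfl | rfl
      · exact (hp _ _ ha).1 a.1.2
      · exact (hp _ _ hu).1 x.2
      · exact (hp _ _ hw).1 y.2
    refine bip_cut G hcubic hess S (T ∪ {u, w}) ?_ ?_ huw
      (fun h => hxy (Subtype.ext h) : (x : V) ≠ (y : V)) (by simp) (by simp) ?_ ?_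
    · intro z hz b hb
      simp only [S, Finset.mem_image] at hz
      obtain ⟨a, ha, rfl⟩ := hz
      by_cases h : b ∈ ({u, w} : Finset V)
      · exact Finset.mem_union_right _ h
      · refine Finset.mem_union_left _ ?_
        rw [hT, Finset.mem_biUnion]
        exact ⟨a, ha, Finset.mem_sdiff.2 ⟨(mem_nb _ _ _).2 hb, h⟩⟩
    · have h1 := Finset.card_union_le T {u, w}
      have h2 : ({u, w} : Finset V).card ≤ 2 := Finset.card_le_two
      omega
    · rw [Finset.mem_union]
      rintro (h | h)
      · exact (hpS _ h).2.1 rfl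
      · exact hpT _ h x.2
    · rw [Finset.mem_union]
      rintro (h | h)
      · exact (hpS _ h).2.2 rfl
      · exact hpT _ h y.2
  obtain ⟨h, hinj, hh⟩ := hall
  have hh1 : ∀ a, G.Adj a.1 (h a) := fun a => by
    have := hh a
    rw [Finset.mem_sdiff, mem_nb] at this
    exact this.1
  have hh2 : ∀ a, h a ≠ u ∧ h a ≠ w := fun a => by
    have := hh a
    simp only [Finset.mem_sdiff, Finset.mem_insert, Finset.mem_singleton, not_or] at this
    exact this.2
  let k : {v // p v} → V := fun a =>
    if h1 : a = x then u else if h2 : a = y then w else h ⟨a, h1, h2⟩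
  have hkx : k x = u := by simp [k]
  have hky : k y = w := by simp [k, hxy.symm]
  have hkz : ∀ a (h1 : a ≠ x) (h2 : a ≠ y), k a = h ⟨a, h1, h2⟩ := by
    intro a h1 h2; simp [k, h1, h2]
  obtain ⟨f, hf⟩ := equiv_of_inj G hcubic p hp k (by
    intro a b hab
    by_cases ax : a = x
    · by_cases bx : b = x
      · rw [ax, bx]
      · by_cases hby : b = y
        · rw [ax, hby, hkx, hky] at hab; exact absurd hab huw
        · rw [ax, hkx, hkz b bx hby] at hab; exact absurd hab.symm (hh2 _).1
    · by_cases ay : a = y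
      · by_cases bx : b = x
        · rw [ay, bx, hkx, hky] at hab; exact absurd hab.symm huw
        · by_cases hby : b = y
          · rw [ay, hby]
          · rw [ay, hky, hkz b bx hby] at hab; exact absurd hab.symm (hh2 _).2
      · rw [hkz a ax ay] at hab
        by_cases bx : b = x
        · rw [bx, hkx] at hab; exact absurd hab (hh2 _).1
        · by_cases hby : b = y
          · rw [hby, hky] at hab; exact absurd hab (hh2 _).2
          · rw [hkz b bx hby] at hab
            exact congrArg Subtype.val (hinj hab)) (by
    intro a
    by_cases ax : a = x
    · rw [ax, hkx]; exact hu
    · by_cases ay : a = y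
      · rw [ay, hky]; exact hw
      · rw [hkz a ax ay]; exact hh1 ⟨a, ax, ay⟩)
  refine ⟨f, fun a => ?_, by rw [hf, hkx], by rw [hf, hky]⟩
  rw [hf]
  by_cases ax : a = x
  · rw [ax, hkx]; exact hu
  · by_cases ay : a = y
    · rw [ay, hky]; exact hw
    · rw [hkz a ax ay]; exact hh1 ⟨a, ax, ay⟩

open Classical in
/-- Second Hall argument: the complement of a perfect matching has a perfect matching. -/
lemma exists_second {V : Type*} [Fintype V] (G : SimpleGraph V)
    (hcubic : ∀ v : V, (G.neighborSet v).ncard = 3) (p : V → Prop)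
    (hp : ∀ x y, G.Adj x y → (p x ↔ ¬ p y)) (f : {v // p v} ≃ {v // ¬ p v})
    (hf : ∀ a : {v // p v}, G.Adj a (f a)) :
    ∃ g : {v // p v} ≃ {v // ¬ p v}, (∀ a : {v // p v}, G.Adj a (g a)) ∧ ∀ a, f a ≠ g a := by
  have hall : ∃ h : {v // p v} → V, Function.Injective h ∧
      ∀ a : {v // p v}, h a ∈ (nb G a).erase (f a) := by
    rw [← Finset.all_card_le_biUnion_card_iff_exists_injective
      (fun a : {v // p v} => (nb G a).erase (f a))]
    intro s
    set T := s.biUnion (fun a : {v // p v} => (nb G a).erase (f a)) with hT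
    have := Finset.card_mul_le_card_mul (s := s) (t := T) (m := 2) (n := 2)
      (fun (a : {v // p v}) (b : V) => b ∈ (nb G a).erase (f a)) ?_ ?_
    · omega
    · intro a ha
      have h1 : ((nb G a).erase (f a)).card = 2 := by
        rw [Finset.card_erase_of_mem ((mem_nb _ _ _).2 (hf a)), card_nb G hcubic]
      rw [← h1]
      apply Finset.card_le_card
      intro b hb
      rw [Finset.mem_bipartiteAbove]
      exact ⟨Finset.mem_biUnion.2 ⟨a, ha, hb⟩, hb⟩
    · intro b hb
      rw [hT, Finset.mem_biUnion] at hb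
      obtain ⟨a, -, hab⟩ := hb
      have hab' := (mem_nb _ _ _).1 (Finset.mem_of_mem_erase hab)
      have hpb : ¬ p b := (hp _ _ hab').1 a.2
      have h0 := hf (f.symm ⟨b, hpb⟩)
      rw [Equiv.apply_symm_apply] at h0
      have h1 : ((nb G b).erase (f.symm ⟨b, hpb⟩)).card = 2 := by
        rw [Finset.card_erase_of_mem ((mem_nb _ _ _).2 h0.symm), card_nb G hcubic]
      rw [← h1, ← Finset.card_image_of_injective _ (Subtype.val_injective (p := p))]
      apply Finset.card_le_card
      intro z hz
      simp only [Finset.mem_image, Finset.mem_bipartiteBelow, Finset.mem_erase, mem_nb] at hz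
      obtain ⟨c, ⟨-, hc1, hc2⟩, rfl⟩ := hz
      rw [Finset.mem_erase, mem_nb]
      refine ⟨fun h => hc1 ?_, hc2.symm⟩
      have : c = f.symm ⟨b, hpb⟩ := Subtype.ext h
      rw [this]; simp
  obtain ⟨h, hinj, hh⟩ := hall
  obtain ⟨g, hg⟩ := equiv_of_inj G hcubic p hp h hinj
    (fun a => (mem_nb _ _ _).1 (Finset.mem_of_mem_erase (hh a)))
  refine ⟨g, fun a => ?_, fun a h' => ?_⟩
  · rw [hg]; exact (mem_nb _ _ _).1 (Finset.mem_of_mem_erase (hh a))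
  · exact Finset.ne_of_mem_erase (hh a) (by rw [← hg, h'])

lemma unionGraph_le {V : Type*} (G : SimpleGraph V) (p : V → Prop)
    (f g : {v // p v} ≃ {v // ¬ p v}) (hf : ∀ a : {v // p v}, G.Adj a (f a)) (hg : ∀ a : {v // p v}, G.Adj a (g a)) :
    unionGraph p f g ≤ G := by
  intro x y h
  rcases h with ⟨a, rfl, rfl | rfl⟩ | ⟨a, rfl, rfl | rfl⟩
  · exact hf a
  · exact hg a
  · exact (hf a).symm
  · exact (hg a).symm

open Classical in
lemma third_nb {V : Type*} [Fintype V] (G : SimpleGraph V)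
    (hcubic : ∀ v : V, (G.neighborSet v).ncard = 3) {v x y : V} (hx : G.Adj v x) (hy : G.Adj v y)
    (hxy : x ≠ y) : ∃ u, G.Adj v u ∧ u ≠ x ∧ u ≠ y ∧ ∀ z, G.Adj v z → z = x ∨ z = y ∨ z = u := by
  have h1 : (((nb G v).erase x).erase y).card = 1 := by
    rw [Finset.card_erase_of_mem, Finset.card_erase_of_mem ((mem_nb _ _ _).2 hx),
      card_nb G hcubic]
    rw [Finset.mem_erase, mem_nb]
    exact ⟨hxy.symm, hy⟩
  obtain ⟨u, hu⟩ := Finset.card_eq_one.1 h1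
  have h2 : ∀ z, (z ≠ y ∧ z ≠ x ∧ G.Adj v z) ↔ z = u := by
    intro z
    rw [← mem_nb, ← Finset.mem_erase, ← Finset.mem_erase, hu, Finset.mem_singleton]
  obtain ⟨h3, h4, h5⟩ := (h2 u).2 rfl
  refine ⟨u, h5, h4, h3, fun z hz => ?_⟩
  have := h2 z
  tauto

open Classical in
lemma iso_of_small {V : Type*} [Fintype V] (G : SimpleGraph V)
    (hcubic : ∀ v : V, (G.neighborSet v).ncard = 3) (p : V → Prop)
    (hp : ∀ x y, G.Adj x y → (p x ↔ ¬ p y))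
    (hA : (Finset.univ.filter p).card = 3) (hB : (Finset.univ.filter (fun x => ¬ p x)).card = 3) :
    Nonempty (G ≃g completeBipartiteGraph (Fin 3) (Fin 3)) := by
  have hadj : ∀ x y, p x → ¬ p y → G.Adj x y := by
    intro x y hx hy
    have : nb G x = Finset.univ.filter (fun x => ¬ p x) := by
      apply Finset.eq_of_subset_of_card_le
      · intro z hz
        simp only [Finset.mem_filter, Finset.mem_univ, true_and]
        exact (hp _ _ ((mem_nb _ _ _).1 hz)).1 hx
      · rw [card_nb G hcubic, hB]
    rw [← mem_nb, this]
    simpa using hy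
  have eA : {v // p v} ≃ Fin 3 := Fintype.equivFinOfCardEq (by rw [Fintype.card_subtype, hA])
  have eB : {v // ¬ p v} ≃ Fin 3 := Fintype.equivFinOfCardEq (by rw [Fintype.card_subtype, hB])
  refine ⟨⟨(Equiv.sumCompl p).symm.trans (Equiv.sumCongr eA eB), ?_⟩⟩
  intro x y
  by_cases hx : p x <;> by_cases hy : p y
  · have h : ¬ G.Adj x y := fun h => (hp _ _ h).1 hx hy
    simp [Equiv.sumCompl_symm_apply_of_pos, hx, hy, h]
  · have h := hadj x y hx hy
    simp [hx, hy, h]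
  · have h := (hadj y x hy hx).symm
    simp [hx, hy, h]
  · have h : ¬ G.Adj x y := fun h => hx ((hp _ _ h).2 hy)
    simp [hx, hy, h]

open Classical in
lemma main_aux {V : Type*} [Fintype V] (G : SimpleGraph V)
    (hcubic : ∀ v : V, (G.neighborSet v).ncard = 3)
    (hess : EssentiallyFourEdgeConnected G)
    (hpseudo : PseudoTwoFactorIsomorphic G) (p : V → Prop)
    (hp : ∀ x y, G.Adj x y → (p x ↔ ¬ p y)) (v1 v2 v3 v4 : V)
    (h12 : G.Adj v1 v2) (h23 : G.Adj v2 v3) (h34 : G.Adj v3 v4) (h41 : G.Adj v4 v1)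
    (h13 : v1 ≠ v3) (h24 : v2 ≠ v4) (hp1 : p v1) :
    Nonempty (G ≃g completeBipartiteGraph (Fin 3) (Fin 3)) := by
  have hp3 : p v3 := by
    have := hp _ _ h12; have := hp _ _ h23; tauto
  have hp2 : ¬ p v2 := (hp _ _ h12).1 hp1
  have hp4 : ¬ p v4 := (hp _ _ h34).1 hp3
  obtain ⟨u, hu, hu2, hu4, hun⟩ := third_nb G hcubic h12 h41.symm h24
  obtain ⟨w, hw, hw2, hw4, hwn⟩ := third_nb G hcubic h23.symm h34 h24
  have hpu : ¬ p u := (hp _ _ hu).1 hp1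
  by_cases huw : u = w
  · subst huw
    have hAB := card_sides G hcubic p hp
    have hB3 : ({v2, v4, u} : Finset V).card = 3 := by
      rw [Finset.card_eq_three]
      exact ⟨v2, v4, u, h24, hu2.symm, hu4.symm, rfl⟩
    have hsub : ({v2, v4, u} : Finset V) ⊆ Finset.univ.filter (fun x => ¬ p x) := by
      intro z hz
      simp only [Finset.mem_insert, Finset.mem_singleton] at hz
      simp only [Finset.mem_filter, Finset.mem_univ, true_and]
      rcases hz with rfl | rfl | rfl <;> assumption
    have hge := Finset.card_le_card hsub
    rw [hB3] at hge
    rcases Nat.eq_or_lt_of_le hge with heq | hlt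
    · exact iso_of_small G hcubic p hp (hAB.trans heq.symm) heq.symm
    · exfalso
      obtain ⟨b, hb, hb'⟩ := Finset.exists_mem_notMem_of_card_lt_card (hB3 ▸ hlt)
      have hA2 : ({v1, v3} : Finset V).card = 2 := Finset.card_pair h13
      obtain ⟨a, ha, ha'⟩ := Finset.exists_mem_notMem_of_card_lt_card
        (s := ({v1, v3} : Finset V)) (t := Finset.univ.filter p) (by omega)
      simp only [Finset.mem_filter, Finset.mem_univ, true_and] at ha hb
      simp only [Finset.mem_insert, Finset.mem_singleton, not_or] at ha' hb'
      refine bip_cut G hcubic hess {v1, v3} {v2, v4, u} ?_ (by omega) h13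
        (c := a) (d := b) (fun h => hb (h ▸ ha)) (by simp) (by simp) ?_ ?_
      · intro s hs y hy
        simp only [Finset.mem_insert, Finset.mem_singleton] at hs ⊢
        rcases hs with rfl | rfl
        · exact hun y hy
        · exact hwn y hy
      · simp only [Finset.mem_union, Finset.mem_insert, Finset.mem_singleton]
        rintro ((h | h) | (h | h | h))
        · exact ha'.1 h
        · exact ha'.2 h
        · exact hp2 (h ▸ ha)
        · exact hp4 (h ▸ ha)
        · exact hpu (h ▸ ha)
      · simp only [Finset.mem_union, Finset.mem_insert, Finset.mem_singleton]
        rintro ((h | h) | (h | h | h))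
        · exact hb (h ▸ hp1)
        · exact hb (h ▸ hp3)
        · exact hb'.1 h
        · exact hb'.2.1 h
        · exact hb'.2.2 h
  · exfalso
    let x : {v // p v} := ⟨v1, hp1⟩
    let y : {v // p v} := ⟨v3, hp3⟩
    have hxy : x ≠ y := fun h => h13 (congrArg Subtype.val h)
    obtain ⟨f, hf, hfx, hfy⟩ := exists_first G hcubic hess p hp x y u w hxy huw hu hw
    obtain ⟨g, hg, hfg⟩ := exists_second G hcubic p hp f hf
    have hgx : (g x : V) = v2 ∨ (g x : V) = v4 := by
      rcases hun _ (hg x) with h | h | h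
      · exact Or.inl h
      · exact Or.inr h
      · exact absurd (Subtype.ext (hfx.trans h.symm)) (hfg x)
    have hgy : (g y : V) = v2 ∨ (g y : V) = v4 := by
      rcases hwn _ (hg y) with h | h | h
      · exact Or.inl h
      · exact Or.inr h
      · exact absurd (Subtype.ext (hfy.trans h.symm)) (hfg y)
    set g' := (Equiv.swap x y).trans g with hg'
    have hg'x : g' x = g y := by simp [hg']
    have hg'y : g' y = g x := by simp [hg']
    have hg'z : ∀ z, z ≠ x → z ≠ y → g' z = g z := by
      intro z h1 h2
      simp [hg', Equiv.swap_apply_of_ne_of_ne h1 h2]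
    have hadj' : ∀ a : {v // p v}, G.Adj a (g' a) := by
      intro a
      by_cases ax : a = x
      · rw [ax, hg'x]
        rcases hgy with h | h <;> rw [h]
        · exact h12
        · exact h41.symm
      · by_cases ay : a = y
        · rw [ay, hg'y]
          rcases hgx with h | h <;> rw [h]
          · exact h23.symm
          · exact h34
        · rw [hg'z a ax ay]; exact hg a
    have hfg' : ∀ a, f a ≠ g' a := by
      intro a h
      have h' := congrArg Subtype.val h
      by_cases ax : a = x
      · rw [ax, hg'x, hfx] at h'
        rcases hgy with h1 | h1 <;> rw [h1] at h'
        · exact hu2 h'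
        · exact hu4 h'
      · by_cases ay : a = y
        · rw [ay, hg'y, hfy] at h'
          rcases hgx with h1 | h1 <;> rw [h1] at h'
          · exact hw2 h'
          · exact hw4 h'
        · rw [hg'z a ax ay] at h; exact hfg a h
    exact unionGraph_swap p f g hfg x y hxy hfg'
      (hpseudo.2 _ _ ⟨unionGraph_le G p f g hf hg, unionGraph_two p f g hfg⟩
        ⟨unionGraph_le G p f g' hf hadj', unionGraph_two p f g' hfg'⟩)

/-- an essentially 4-edge-connected pseudo 2-factor isomorphic cubic
bipartite graph containing a cycle of length 4 is isomorphic to `K_{3,3}`. -/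
theorem stmt_14 {V : Type*} [Fintype V] (G : SimpleGraph V)
    (hcubic : ∀ v : V, (G.neighborSet v).ncard = 3)
    (hbip : G.Colorable 2)
    (hess : EssentiallyFourEdgeConnected G)
    (hpseudo : PseudoTwoFactorIsomorphic G)
    (hC4 : ∃ (v : V) (w : G.Walk v v), w.IsCycle ∧ w.length = 4) :
    Nonempty (G ≃g completeBipartiteGraph (Fin 3) (Fin 3)) := by
  obtain ⟨C⟩ := hbip
  have hp : ∀ x y, G.Adj x y → (C x = 0 ↔ ¬ C y = 0) := by
    intro x y h
    have := C.valid h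
    omega
  obtain ⟨v, q, hq, hl⟩ := hC4
  obtain ⟨v2, v3, v4, h12, h23, h34, h41, h13, h24⟩ : ∃ v2 v3 v4, G.Adj v v2 ∧ G.Adj v2 v3 ∧
      G.Adj v3 v4 ∧ G.Adj v4 v ∧ v ≠ v3 ∧ v2 ≠ v4 := by
    match q, hq, hl with
    | .cons (v := v2) h1 (.cons (v := v3) h2 (.cons (v := v4) h3 (.cons h4 .nil))), hq, _ =>
      refine ⟨v2, v3, v4, h1, h2, h3, h4, ?_, ?_⟩
      · have := hq.support_nodup
        simp at this
        tauto
      · have := hq.support_nodup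
        simp at this
        tauto
  by_cases hv : C v = 0
  · exact main_aux G hcubic hess hpseudo (fun x => C x = 0) hp v v2 v3 v4 h12 h23 h34 h41 h13 h24 hv
  · refine main_aux G hcubic hess hpseudo (fun x => C x = 0) hp v2 v3 v4 v h23 h34 h41 h12 h24
      h13.symm ?_
    have := hp _ _ h12
    tauto
end
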